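/- For every τ in the complex upper half-plane ℍ, one has Δ(2τ)/Δ(4τ) = h(τ)² − 64, where Δ(τ) = η(τ)²⁴. -/

import Mathlib

noncomputable section
open Complex Real

/-- `q = e^{2πiτ}`. -/
def nome (τ : ℂ) : ℂ := Complex.exp (2 * (π : ℂ) * I * τ)

/-- Dedekind eta function `η(τ) = e^{πiτ/12} ∏_{n≥1} (1 − qⁿ)`. -/
def dedekindEta (τ : ℂ) : ℂ :=
  Complex.exp ((π : ℂ) * I * τ / 12) * ∏' n : ℕ, (1 - nome τ ^ (n + 1))

/-- Sum of the positive odd divisors of `n`. -/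
def sigmaOdd (n : ℕ) : ℕ := ∑ d ∈ n.divisors.filter (fun d => Odd d), d

/-- `E*(τ) = 1 + 24 Σ_{n≥1} σ_odd(n) qⁿ`. -/
def Estar (τ : ℂ) : ℂ := 1 + 24 * ∑' n : ℕ, (sigmaOdd (n + 1) : ℂ) * nome τ ^ (n + 1)

/-- `h(τ) = (η(2τ)⁴/η(4τ)⁸)·E*(2τ)`. -/
def hfun (τ : ℂ) : ℂ := dedekindEta (2 * τ) ^ 4 / dedekindEta (4 * τ) ^ 8 * Estar (2 * τ)


lemma eta_eq (z : ℂ) : dedekindEta z = ModularForm.eta z := by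
  unfold dedekindEta ModularForm.eta ModularForm.eta_q nome Function.Periodic.qParam
  congr 2
  · push_cast; ring
  · simp

lemma nome_norm_lt {z : ℂ} (hz : 0 < z.im) : ‖nome z‖ < 1 := by
  simpa [nome] using UpperHalfPlane.norm_exp_two_pi_I_lt_one ⟨z, hz⟩

lemma sigmaOdd_le (n : ℕ) : sigmaOdd n ≤ n ^ 2 := by
  have h1 : sigmaOdd n ≤ ∑ d ∈ n.divisors, d :=
    Finset.sum_le_sum_of_subset (Finset.filter_subset _ _)
  refine h1.trans ?_
  simpa [ArithmeticFunction.sigma_one_apply] using ArithmeticFunction.sigma_le_pow_succ 1 n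

lemma sigmaOdd_odd {n : ℕ} (hn : Odd n) : sigmaOdd n = ArithmeticFunction.sigma 1 n := by
  rw [ArithmeticFunction.sigma_one_apply, sigmaOdd, Finset.filter_true_of_mem]
  intro d hd
  exact hn.of_dvd_nat (Nat.dvd_of_mem_divisors hd)

lemma sigmaOdd_even (n : ℕ) (hn : n ≠ 0) :
    sigmaOdd (2 * n) + 2 * ArithmeticFunction.sigma 1 n = ArithmeticFunction.sigma 1 (2 * n) := by
  rw [ArithmeticFunction.sigma_one_apply, ArithmeticFunction.sigma_one_apply, sigmaOdd,
    ← Finset.sum_filter_add_sum_filter_not (2 * n).divisors (fun d => Odd d)]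
  congr 1
  rw [Finset.mul_sum]
  refine Finset.sum_bij (fun d _ => 2 * d) ?_ ?_ ?_ ?_
  · intro d hd
    simp only [Finset.mem_filter, Nat.mem_divisors] at hd ⊢
    refine ⟨⟨mul_dvd_mul_left 2 hd.1, by omega⟩, by simp⟩
  · intro a _ b _ h
    simpa using h
  · intro b hb
    simp only [Finset.mem_filter, Nat.mem_divisors, Nat.not_odd_iff_even] at hb
    obtain ⟨c, hc⟩ := hb.2
    refine ⟨c, ?_, by omega⟩
    simp only [Nat.mem_divisors]
    refine ⟨?_, hn⟩
    have := hb.1.1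
    rw [hc, ← two_mul] at this
    exact Nat.dvd_of_mul_dvd_mul_left (by norm_num) this
  · simp

lemma summable_sigma {q : ℂ} (hq : ‖q‖ < 1) (c : ℕ → ℕ) (hc : ∀ n, c n ≤ n ^ 2) :
    Summable fun n : ℕ => (c n : ℂ) * q ^ n := by
  refine Summable.of_norm_bounded (g := fun n : ℕ => ‖(n : ℂ) ^ 2 * q ^ n‖)
    (summable_norm_pow_mul_geometric_of_norm_lt_one 2 hq) ?_
  intro n
  rw [norm_mul, norm_mul]
  gcongr
  rw [← Nat.cast_pow, Complex.norm_natCast, Complex.norm_natCast]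
  exact_mod_cast hc n

lemma tsum_aux {q : ℂ} (hq : ‖q‖ < 1) (a b : ℕ → ℕ) (ha : ∀ n, a n ≤ n ^ 2)
    (hb : ∀ n, b n ≤ n ^ 2) (he : ∀ n, a (2 * n) + 2 * b n = b (2 * n))
    (ho : ∀ n, a (2 * n + 1) = b (2 * n + 1)) :
    ∑' n : ℕ, (a n : ℂ) * q ^ n =
      ∑' n : ℕ, (b n : ℂ) * q ^ n - 2 * ∑' n : ℕ, (b n : ℂ) * (q ^ 2) ^ n := by
  have hq2 : ‖q ^ 2‖ < 1 := by
    rw [norm_pow]; exact pow_lt_one₀ (norm_nonneg _) hq (by norm_num)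
  have h1 := summable_sigma hq _ ha
  have h2 := summable_sigma hq _ hb
  have h3 := summable_sigma hq2 _ hb
  have inj0 : Function.Injective (fun k : ℕ => 2 * k) := fun a b h => by simpa using h
  have inj1 : Function.Injective (fun k : ℕ => 2 * k + 1) := fun a b h => by simpa using h
  have e1 := tsum_even_add_odd (f := fun n : ℕ => (a n : ℂ) * q ^ n)
    (h1.comp_injective inj0) (h1.comp_injective inj1)
  have e2 := tsum_even_add_odd (f := fun n : ℕ => (b n : ℂ) * q ^ n)
    (h2.comp_injective inj0) (h2.comp_injective inj1)
  have e3 := Summable.tsum_sub (f := fun k : ℕ => (b (2 * k) : ℂ) * q ^ (2 * k))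
    (h2.comp_injective inj0) (h3.mul_left 2)
  have e4 : ∀ k : ℕ, (b (2 * k) : ℂ) * q ^ (2 * k) - 2 * ((b k : ℂ) * (q ^ 2) ^ k) =
      (a (2 * k) : ℂ) * q ^ (2 * k) := by
    intro k
    rw [← he k]
    push_cast
    ring
  rw [tsum_mul_left, tsum_congr e4] at e3
  rw [← e1, ← e2, e3]
  simp only [ho]
  ring

lemma tsum_sigmaOdd {q : ℂ} (hq : ‖q‖ < 1) :
    ∑' n : ℕ, (sigmaOdd n : ℂ) * q ^ n =
      ∑' n : ℕ, (ArithmeticFunction.sigma 1 n : ℂ) * q ^ n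
       - 2 * ∑' n : ℕ, (ArithmeticFunction.sigma 1 n : ℂ) * (q ^ 2) ^ n := by
  refine tsum_aux hq sigmaOdd (fun n => ArithmeticFunction.sigma 1 n) sigmaOdd_le
    (fun n => ArithmeticFunction.sigma_le_pow_succ 1 n) ?_ ?_
  · intro k
    rcases eq_or_ne k 0 with rfl | hk
    · simp [sigmaOdd]
    · exact sigmaOdd_even k hk
  · intro k
    exact sigmaOdd_odd ⟨k, rfl⟩

open EisensteinSeries in
lemma E2_eq (z : UpperHalfPlane) : E2 z =
    1 - 24 * ∑' n : ℕ, (ArithmeticFunction.sigma 1 n : ℂ) * nome z ^ n := by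
  rw [E2_eq_tsum_cexp]
  congr 2
  change ∑' n : ℕ+, (ArithmeticFunction.sigma 1 n : ℂ) * nome z ^ (n : ℕ) = _
  rw [tsum_pnat_eq_tsum_succ (f := fun n : ℕ => (ArithmeticFunction.sigma 1 n : ℂ) * nome z ^ n)]
  rw [(summable_sigma (nome_norm_lt z.2) _ (fun n =>
    ArithmeticFunction.sigma_le_pow_succ 1 n)).tsum_eq_zero_add]
  simp

def dbl (z : UpperHalfPlane) : UpperHalfPlane := ⟨2 * z, by simpa using z.2⟩

lemma nome_two (z : ℂ) : nome (2 * z) = nome z ^ 2 := by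
  rw [nome, nome, ← Complex.exp_nat_mul]; push_cast; ring_nf

def Eqq (q : ℂ) : ℂ := 1 + 24 * ∑' n : ℕ, (sigmaOdd n : ℂ) * q ^ n

lemma Estar_eq_Eqq {z : ℂ} (hz : 0 < z.im) : Estar z = Eqq (nome z) := by
  unfold Estar Eqq
  rw [(summable_sigma (nome_norm_lt hz) _ sigmaOdd_le).tsum_eq_zero_add]
  simp [sigmaOdd]

open EisensteinSeries in
lemma Estar_eq (z : UpperHalfPlane) : Estar z = 2 * E2 (dbl z) - E2 z := by
  rw [Estar_eq_Eqq z.2, Eqq, tsum_sigmaOdd (nome_norm_lt z.2), E2_eq, E2_eq]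
  have : nome (dbl z : ℂ) = nome z ^ 2 := nome_two z
  rw [this]
  ring

open EisensteinSeries in
lemma E2_S (z w : UpperHalfPlane) (hw : (w : ℂ) = -1 / z) :
    E2 w = z ^ 2 * E2 z - 6 * I * z / π := by
  have hE2 := congrFun (E2_slash_action ModularGroup.S) z
  have hw' : ModularGroup.S • z = w := by
    ext
    rw [UpperHalfPlane.modular_S_smul, hw]
    simp [neg_div]
  rw [ModularForm.SL_slash_apply, hw'] at hE2
  simp only [Pi.sub_apply, Pi.smul_apply, D2_S, riemannZeta_two, ModularGroup.denom_S,
    smul_eq_mul] at hE2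
  have hz := z.ne_zero
  have hpi : (π : ℂ) ≠ 0 := by exact_mod_cast Real.pi_ne_zero
  rw [zpow_neg, mul_inv_eq_iff_eq_mul₀ (by simpa using hz)] at hE2
  rw [hE2]
  norm_cast
  push_cast
  field_simp

lemma Estar_W (z w : UpperHalfPlane) (hw : (w : ℂ) = -1 / (2 * z)) :
    Estar w = -2 * z ^ 2 * Estar z := by
  have hz := z.ne_zero
  rw [Estar_eq, Estar_eq, E2_S (dbl z) w hw, E2_S z (dbl w) (by simp [dbl, hw]; field_simp)]
  simp only [dbl]
  push_cast
  ring

lemma eta_S8 {z : ℂ} (hz : 0 < z.im) : dedekindEta (-1 / z) ^ 8 = z ^ 4 * dedekindEta z ^ 8 := by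
  have h := ModularForm.eta_comp_eq_csqrt_I_inv (x := z) hz
  have hz0 : z ≠ 0 := by rintro rfl; simp at hz
  have key : ∀ w : ℂ, w ≠ 0 → Complex.sqrt w ^ 8 = w ^ 4 := by
    intro w hw
    rw [sqrt_eq_exp hw, ← Complex.exp_nat_mul]
    rw [show ((8 : ℕ) : ℂ) * (Complex.log w / 2) = (4 : ℕ) * Complex.log w by push_cast; ring,
      Complex.exp_nat_mul, Complex.exp_log hw]
  simp only [Function.comp, Pi.smul_apply, Pi.mul_apply, smul_eq_mul] at h
  rw [eta_eq, eta_eq, h, mul_pow, mul_pow, inv_pow, key _ I_ne_zero, key _ hz0]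
  simp

lemma eta_ne {z : ℂ} (hz : 0 < z.im) : dedekindEta z ≠ 0 := by
  rw [eta_eq]; exact ModularForm.eta_ne_zero hz

def FF (z : ℂ) : ℂ := Estar z ^ 2 - dedekindEta z ^ 16 / dedekindEta (2 * z) ^ 8
  - 64 * dedekindEta (2 * z) ^ 16 / dedekindEta z ^ 8

lemma FF_W (z : ℂ) (hz : 0 < z.im) : FF (-1 / (2 * z)) = 4 * z ^ 4 * FF z := by
  have hz0 : z ≠ 0 := by rintro rfl; simp at hz
  have hz2 : 0 < (2 * z).im := by simpa using hz
  have hw : 0 < (-1 / (2 * z)).im := by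
    have := UpperHalfPlane.im_inv_neg_coe_pos ⟨2 * z, hz2⟩
    simpa [neg_div, inv_neg] using this
  have h1 := Estar_W ⟨z, hz⟩ ⟨_, hw⟩ rfl
  simp only at h1
  have h2 := eta_S8 hz
  have h3 := eta_S8 hz2
  have e : 2 * (-1 / (2 * z)) = -1 / z := by field_simp
  have n1 := eta_ne hz
  have n2 := eta_ne hz2
  unfold FF
  rw [h1, e, show ∀ x : ℂ, x ^ 16 = (x ^ 8) ^ 2 by intro x; ring, h3, h2,
    show ∀ x : ℂ, x ^ 16 = (x ^ 8) ^ 2 by intro x; ring, h2]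
  field_simp
  ring

def PP (q : ℂ) : ℂ := ∏' n : ℕ, (1 - q ^ (n + 1))

lemma PP_ne {q : ℂ} (hq : ‖q‖ < 1) : PP q ≠ 0 := by
  unfold PP
  refine tprod_one_add_ne_zero_of_summable (f := fun n : ℕ ↦ -q ^ (n + 1)) ?_ ?_
  · intro i h
    have h2 : q ^ (i + 1) = 1 := by linear_combination -h
    have h3 : ‖q‖ ^ (i + 1) < 1 := pow_lt_one₀ (norm_nonneg _) hq (by simp)
    rw [← norm_pow, h2] at h3
    simp at h3
  · simpa using (summable_nat_add_iff 1).mpr (summable_geometric_of_lt_one (norm_nonneg _) hq)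

lemma PP_diff : DifferentiableOn ℂ PP (Metric.ball 0 1) :=
  ModularForm.differentiableOn_tprod_one_sub_pow

lemma Eqq_diff : DifferentiableOn ℂ Eqq (Metric.ball 0 1) := by
  intro q hq
  obtain ⟨r, h1, h2⟩ := exists_between (show ‖q‖ < 1 by simpa using hq)
  have hr : 0 ≤ r := (norm_nonneg _).trans h1.le
  have hq' : q ∈ Metric.ball (0 : ℂ) r := by simpa using h1
  have hs : Summable fun n : ℕ => ‖((n : ℝ) ^ 2 * r ^ n)‖ :=
    summable_norm_pow_mul_geometric_of_norm_lt_one 2 (by rwa [Real.norm_of_nonneg hr])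
  have key : DifferentiableOn ℂ (fun w : ℂ => ∑' n : ℕ, (sigmaOdd n : ℂ) * w ^ n)
      (Metric.ball 0 r) := by
    refine differentiableOn_tsum_of_summable_norm hs (fun n => by fun_prop) Metric.isOpen_ball ?_
    intro n w hw
    have hw' : ‖w‖ ≤ r := by simpa using (Metric.mem_ball.mp hw).le
    rw [norm_mul, norm_pow, norm_mul, norm_pow, norm_pow, Real.norm_of_nonneg hr]
    gcongr
    rw [Complex.norm_natCast, Real.norm_natCast]
    exact_mod_cast sigmaOdd_le n
  have := (key.differentiableAt (Metric.isOpen_ball.mem_nhds hq'))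
  have h3 : DifferentiableAt ℂ Eqq q := (this.const_mul 24).const_add 1
  exact h3.differentiableWithinAt

def phi (q : ℂ) : ℂ := Eqq q ^ 2 - PP q ^ 16 / PP (q ^ 2) ^ 8 - 64 * (q * PP (q ^ 2) ^ 16 / PP q ^ 8)

lemma norm_sq_lt {q : ℂ} (hq : ‖q‖ < 1) : ‖q ^ 2‖ < 1 := by
  rw [norm_pow]; exact pow_lt_one₀ (norm_nonneg _) hq (by norm_num)

lemma phi_diff : DifferentiableOn ℂ phi (Metric.ball 0 1) := by
  have h2 : DifferentiableOn ℂ (fun q : ℂ => PP (q ^ 2)) (Metric.ball 0 1) :=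
    PP_diff.comp (by fun_prop) (fun q hq => by simpa using norm_sq_lt (by simpa using hq))
  refine ((Eqq_diff.pow 2).sub ((PP_diff.pow 16).div (h2.pow 8) ?_)).sub
    ((((differentiableOn_id.mul (h2.pow 16))).div (PP_diff.pow 8) ?_).const_mul 64)
  · intro q hq
    exact pow_ne_zero _ (PP_ne (norm_sq_lt (by simpa using hq)))
  · intro q hq
    exact pow_ne_zero _ (PP_ne (by simpa using hq))

lemma phi_zero : phi 0 = 0 := by
  have h1 : Eqq 0 = 1 := by
    unfold Eqq
    rw [tsum_eq_single 0]
    · simp [sigmaOdd]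
    · intro n hn; simp [hn]
  have h2 : PP 0 = 1 := by simp [PP]
  simp [phi, h1, h2]

lemma FF_eq_phi {z : ℂ} (hz : 0 < z.im) : FF z = phi (nome z) := by
  have e1 : dedekindEta z = cexp (π * I * z / 12) * PP (nome z) := rfl
  have e2 : dedekindEta (2 * z) = cexp (π * I * z / 12) ^ 2 * PP (nome z ^ 2) := by
    rw [dedekindEta, nome_two, ← Complex.exp_nat_mul, PP]
    push_cast
    ring_nf
  have e3 : nome z = cexp (π * I * z / 12) ^ 24 := by
    rw [nome, ← Complex.exp_nat_mul]
    push_cast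
    ring_nf
  have n1 := PP_ne (nome_norm_lt hz)
  have n2 := PP_ne (norm_sq_lt (nome_norm_lt hz))
  have n3 := Complex.exp_ne_zero (π * I * z / 12)
  unfold FF phi
  rw [Estar_eq_Eqq hz, e1, e2]
  have t1 : (cexp (π * I * z / 12) * PP (nome z)) ^ 16 /
      (cexp (π * I * z / 12) ^ 2 * PP (nome z ^ 2)) ^ 8 = PP (nome z) ^ 16 / PP (nome z ^ 2) ^ 8 := by
    field_simp
  have t2 : 64 * (cexp (π * I * z / 12) ^ 2 * PP (nome z ^ 2)) ^ 16 /
     (cexp (π * I * z / 12) * PP (nome z)) ^ 8 =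
      64 * (cexp (π * I * z / 12) ^ 24 * PP (nome z ^ 2) ^ 16 / PP (nome z) ^ 8) := by
    field_simp
  rw [t1, t2, ← e3]

lemma FF_T {z : ℂ} (hz : 0 < z.im) : FF (z + 1) = FF z := by
  rw [FF_eq_phi hz, FF_eq_phi (by simpa using hz)]
  congr 1
  rw [nome, nome, mul_add, mul_one, Complex.exp_add, Complex.exp_two_pi_mul_I, mul_one]

lemma FF_diff : DifferentiableOn ℂ FF {z | 0 < z.im} := by
  have h : DifferentiableOn ℂ (fun z => phi (nome z)) {z | 0 < z.im} := by
    refine phi_diff.comp (t := Metric.ball 0 1) ?_ ?_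
    · unfold nome; fun_prop
    · intro z hz; simpa using nome_norm_lt hz
  exact h.congr fun z hz => FF_eq_phi hz

/-- The norm of `FF` down to level one. -/
def NN (z : ℂ) : ℂ := FF z * FF (z / 2) * FF ((z + 1) / 2)

lemma half_im {z : ℂ} (hz : 0 < z.im) : 0 < (z / 2).im := by
  simpa using hz

lemma half_im' {z : ℂ} (hz : 0 < z.im) : 0 < ((z + 1) / 2).im := by
  simpa using hz

lemma NN_T {z : ℂ} (hz : 0 < z.im) : NN (z + 1) = NN z := by
  unfold NN
  rw [FF_T hz, show (z + 1 + 1) / 2 = z / 2 + 1 by ring, FF_T (half_im hz)]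
  ring

lemma inv_im {z : ℂ} (hz : 0 < z.im) : 0 < (-1 / z).im := by
  have := UpperHalfPlane.im_inv_neg_coe_pos ⟨z, hz⟩
  simpa [neg_div, inv_neg] using this

lemma FF_T' {z : ℂ} (hz : 0 < z.im) : FF (z - 1) = FF z := by
  have := FF_T (z := z - 1) (by simpa using hz)
  rwa [sub_add_cancel, eq_comm] at this

lemma NN_S {z : ℂ} (hz : 0 < z.im) : NN (-1 / z) = z ^ 12 * NN z := by
  have hz0 : z ≠ 0 := by rintro rfl; simp at hz
  have a1 : FF (-1 / z) = 4 * (z / 2) ^ 4 * FF (z / 2) := by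
    rw [← FF_W _ (half_im hz)]; congr 1; field_simp
  have a2 : FF (-1 / z / 2) = 4 * z ^ 4 * FF z := by
    rw [← FF_W _ hz]; congr 1; field_simp
  have hv : 0 < ((z - 1) / 2).im := by simpa using hz
  have hv0 : (z - 1) / 2 ≠ 0 := by intro h; rw [h] at hv; simp at hv
  have hv1 : z - 1 ≠ 0 := by intro h; rw [h] at hv; simp at hv
  have hv2 : 0 < (2 * ((z - 1) / 2)).im := by simpa using hz
  have hu : 0 < (-1 / (2 * ((z - 1) / 2))).im := inv_im hv2
  have hu' : 0 < (-1 / (2 * ((z - 1) / 2)) - 1).im := by simpa using hu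
  have a3 : FF ((-1 / z + 1) / 2) = z ^ 4 * FF ((z + 1) / 2) := by
    have b1 : (-1 / z + 1) / 2 = -1 / (2 * (-1 / (2 * ((z - 1) / 2)) - 1)) := by
      have : 2 * (-1 / (2 * ((z - 1) / 2)) - 1) = -2 * z / (z - 1) := by
        field_simp; ring
      rw [this]
      field_simp
      ring
    rw [b1, FF_W _ hu', FF_T' hu, FF_W _ hv, ← FF_T hv,
      show (z - 1) / 2 + 1 = (z + 1) / 2 by ring]
    have : (-1 / (2 * ((z - 1) / 2)) - 1) = - z / (z - 1) := by
      field_simp; ring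
    rw [this]
    field_simp
    ring
  unfold NN
  rw [a1, a2, a3]
  ring

open UpperHalfPlane Filter Asymptotics Topology in
lemma norm_nome (z : ℂ) : ‖nome z‖ = Real.exp (-2 * π * z.im) := by
  simp [nome, Complex.norm_exp]

open UpperHalfPlane Filter Asymptotics Topology in
lemma tendsto_im : Tendsto (fun z : UpperHalfPlane => z.im) atImInfty atTop := by
  unfold atImInfty
  exact tendsto_comap

open UpperHalfPlane Filter Asymptotics Topology in
lemma tendsto_exp_im : Tendsto (fun z : UpperHalfPlane => Real.exp (-π * z.im)) atImInfty (𝓝 0) :=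
  Real.tendsto_exp_atBot.comp (tendsto_im.const_mul_atTop_of_neg (by linarith [Real.pi_pos]))

open UpperHalfPlane Filter Asymptotics Topology in
lemma NN_isBigO : (fun z : UpperHalfPlane => NN z) =O[atImInfty]
    (fun z => Real.exp (-4 * π * z.im)) := by
  have hd : DifferentiableAt ℂ phi 0 :=
    phi_diff.differentiableAt (Metric.isOpen_ball.mem_nhds (by simp))
  have hO := hd.isBigO_sub
  simp only [phi_zero, sub_zero] at hO
  obtain ⟨C, hC0, hC⟩ := hO.exists_pos
  obtain ⟨δ, hδ, hb⟩ := Metric.eventually_nhds_iff.mp hC.bound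
  refine IsBigO.of_bound (C ^ 3) ?_
  filter_upwards [tendsto_exp_im.eventually (Iio_mem_nhds hδ)] with z hz
  have hz0 : 0 < (z : ℂ).im := z.2
  have hy : z.im = (z : ℂ).im := rfl
  have hpy : 0 < π * (z : ℂ).im := mul_pos Real.pi_pos hz0
  have key : ∀ w : ℂ, 0 < w.im → (z : ℂ).im / 2 ≤ w.im →
      ‖FF w‖ ≤ C * Real.exp (-2 * π * w.im) := by
    intro w hw hw2
    rw [FF_eq_phi hw, ← norm_nome]
    apply hb
    rw [dist_zero_right, norm_nome]
    refine lt_of_le_of_lt ?_ hz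
    rw [hy]
    apply Real.exp_le_exp.mpr
    nlinarith [Real.pi_pos]
  have k1 := key z hz0 (by linarith)
  have k2 := key _ (half_im hz0) (by simp)
  have k3 := key _ (half_im' hz0) (by simp)
  have i2 : ((z : ℂ) / 2).im = (z : ℂ).im / 2 := by simp
  have i3 : (((z : ℂ) + 1) / 2).im = (z : ℂ).im / 2 := by simp
  rw [i2] at k2
  rw [i3] at k3
  unfold NN
  rw [norm_mul, norm_mul, Real.norm_of_nonneg (Real.exp_pos _).le]
  calc _ ≤ (C * Real.exp (-2 * π * (z : ℂ).im)) * (C * Real.exp (-2 * π * ((z : ℂ).im / 2))) *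
        (C * Real.exp (-2 * π * ((z : ℂ).im / 2))) := by gcongr
    _ = C ^ 3 * (Real.exp (-2 * π * (z : ℂ).im) * Real.exp (-2 * π * ((z : ℂ).im / 2)) *
        Real.exp (-2 * π * ((z : ℂ).im / 2))) := by ring
    _ = _ := by
      rw [← Real.exp_add, ← Real.exp_add, hy]
      congr 2
      ring

open UpperHalfPlane Filter Asymptotics Topology in
lemma NN_isLittleO : (fun z : UpperHalfPlane => NN z) =o[atImInfty] ModularForm.discriminant := by
  refine NN_isBigO.trans_isLittleO (IsLittleO.trans_isBigO ?_ ModularForm.exp_isBigO_discriminant)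
  rw [isLittleO_iff_tendsto (fun z h => absurd h (Real.exp_pos _).ne')]
  have := tendsto_exp_im.mul tendsto_exp_im
  rw [mul_zero] at this
  refine this.congr fun z => ?_
  rw [← Real.exp_add, ← Real.exp_sub]
  congr 1
  ring

open UpperHalfPlane Filter Asymptotics Topology in
lemma NN_zeroAt : IsZeroAtImInfty (fun z : UpperHalfPlane => NN z) :=
  NN_isLittleO.isBigO.trans_tendsto ModularForm.discriminant_isZeroAtImInfty

lemma NN_diff : DifferentiableOn ℂ NN {z | 0 < z.im} := by
  refine (FF_diff.mul (FF_diff.comp (by fun_prop) ?_)).mul (FF_diff.comp (by fun_prop) ?_)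
  · intro z hz; exact half_im hz
  · intro z hz; exact half_im' hz

open UpperHalfPlane ModularForm MatrixGroups in
lemma NN_slash_S : ((fun z : UpperHalfPlane => NN z) ∣[(12 : ℤ)] ModularGroup.S) =
    fun z : UpperHalfPlane => NN z := by
  ext z
  rw [SlashInvariantForm.slash_S_apply]
  have h := NN_S z.2
  have e : (-(z : ℂ))⁻¹ = -1 / z := by rw [inv_neg, neg_div, one_div]
  have hz := z.ne_zero
  change NN ((-(z : ℂ))⁻¹) * _ = _
  rw [e, show NN (-1 / (z : ℂ)) = z ^ 12 * NN z from h, zpow_neg]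
  norm_cast
  field_simp

open UpperHalfPlane ModularForm MatrixGroups in
lemma NN_slash_T : ((fun z : UpperHalfPlane => NN z) ∣[(12 : ℤ)] ModularGroup.T) =
    fun z : UpperHalfPlane => NN z := by
  ext z
  have h := NN_T z.2
  rw [SL_slash_apply, modular_T_smul, ModularGroup.denom_apply]
  have e : (((1 : ℝ) +ᵥ z : UpperHalfPlane) : ℂ) = z + 1 := by
    rw [UpperHalfPlane.coe_vadd]; push_cast; ring
  simp only [e]
  rw [show NN ((z : ℂ) + 1) = NN z from h]
  simp [ModularGroup.T]

open UpperHalfPlane ModularForm MatrixGroups in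
def NNform : CuspForm 𝒮ℒ 12 where
  toFun := fun z => NN z
  slash_action_eq' A hA := by
    obtain ⟨A, rfl⟩ := hA
    exact SlashInvariantForm.slash_action_generators_SL2Z NN_slash_S NN_slash_T A
  holo' := by
    rw [UpperHalfPlane.mdifferentiable_iff]
    refine NN_diff.congr fun z hz ↦ ?_
    simp [ofComplex_apply_of_im_pos hz]
  zero_at_cusps' hc := by
    rw [Subgroup.IsArithmetic.isCusp_iff_isCusp_SL2Z] at hc
    rw [OnePoint.isZeroAt_iff_forall_SL2Z hc]
    intro γ _
    rw [SlashInvariantForm.slash_action_generators_SL2Z NN_slash_S NN_slash_T]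
    exact NN_zeroAt

open UpperHalfPlane Filter Asymptotics Topology in
lemma NN_eq_zero (z : UpperHalfPlane) : NN z = 0 := by
  obtain ⟨c, hc⟩ := CuspForm.exists_smul_discriminant_of_weight_eq_twelve NNform
  have hc' : ∀ z : UpperHalfPlane, c * ModularForm.discriminant z = NN z := fun z =>
    DFunLike.congr_fun hc z
  rcases eq_or_ne c 0 with rfl | h0
  · rw [← hc']; simp
  · exfalso
    have h := NN_isLittleO
    simp only [← hc'] at h
    rw [isLittleO_const_mul_left_iff h0] at h
    exact isLittleO_irrefl
      (Frequently.of_forall fun z => ModularForm.discriminant_ne_zero z) h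

lemma FF_eq_zero {z : ℂ} (hz : 0 < z.im) : FF z = 0 := by
  have hopen : IsOpen {z : ℂ | 0 < z.im} := isOpen_lt continuous_const Complex.continuous_im
  have hconn : IsPreconnected {z : ℂ | 0 < z.im} :=
    (convex_halfSpace_im_gt 0).isPreconnected
  have d1 := FF_diff
  have d2 : DifferentiableOn ℂ (fun z => FF (z / 2)) {z | 0 < z.im} :=
    FF_diff.comp (by fun_prop) fun z hz => half_im hz
  have d3 : DifferentiableOn ℂ (fun z => FF ((z + 1) / 2)) {z | 0 < z.im} :=
    FF_diff.comp (by fun_prop) fun z hz => half_im' hz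
  have d12 : DifferentiableOn ℂ (fun z => FF z * FF (z / 2)) {z | 0 < z.im} := d1.mul d2
  rcases AnalyticOnNhd.eq_zero_or_eq_zero_of_mul_eq_zero (d12.analyticOnNhd hopen)
    (d3.analyticOnNhd hopen) (fun z hz => NN_eq_zero ⟨z, hz⟩) hconn with h | h
  · rcases AnalyticOnNhd.eq_zero_or_eq_zero_of_mul_eq_zero (d1.analyticOnNhd hopen)
      (d2.analyticOnNhd hopen) h hconn with h | h
    · exact h z hz
    · have := h (2 * z) (by simpa using hz)
      simpa using this
  · have := h (2 * z - 1) (by simpa using hz)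
    simpa using this

/-- For `τ ∈ ℍ`: `Δ(2τ)/Δ(4τ) = h(τ)² − 64`, where `Δ = η²⁴`. -/
theorem stmt11 (τ : ℂ) (hτ : 0 < τ.im) :
    dedekindEta (2 * τ) ^ 24 / dedekindEta (4 * τ) ^ 24 = hfun τ ^ 2 - 64 := by
  have h2 : 0 < (2 * τ).im := by simpa using hτ
  have h4 : 0 < (4 * τ).im := by simpa using hτ
  have h := FF_eq_zero h2
  have n2 := eta_ne h2
  have n4 := eta_ne h4
  unfold FF at h
  rw [show 2 * (2 * τ) = 4 * τ by ring] at h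
  have hE : Estar (2 * τ) ^ 2 = dedekindEta (2 * τ) ^ 16 / dedekindEta (4 * τ) ^ 8
      + 64 * dedekindEta (4 * τ) ^ 16 / dedekindEta (2 * τ) ^ 8 := by
    linear_combination h
  rw [hfun, mul_pow, hE]
  generalize dedekindEta (2 * τ) = a at *
  generalize dedekindEta (4 * τ) = b at *
  field_simp
  ring
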